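/- (Fundamental Theorem of Asset Pricing for RAROC-based NGD.) Let ℛ𝒟 ⊆ 𝒫 be convex and weakly compact, 𝒫𝒟 an L^1-closed convex subset of ℛ𝒟, A ⊆ L^0 a convex, ℛ𝒟-consistent set, and R ≥ 0. Then there exists no X ∈ A with RAROC(X) > R if and only if ((1/(1+R))·𝒫𝒟 + (R/(1+R))·ℛ𝒟) ∩ ℛ(A) ≠ ∅. -/

import Mathlib

open MeasureTheory Filter Set
open scoped ENNReal

variable {Ω : Type*} [MeasurableSpace Ω]

/-- Densities of probability measures absolutely continuous w.r.t. `P`. -/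
def Dens (P : Measure Ω) : Set (Ω → ℝ) :=
  {Z | Measurable Z ∧ (∀ ω, 0 ≤ Z ω) ∧ ∫⁻ ω, ENNReal.ofReal (Z ω) ∂P = 1}

/-- `E_Q[X] = E_Q[X⁺] − E_Q[X⁻]` with the convention `∞ − ∞ = −∞`, where `dQ/dP = Z`. -/
noncomputable def eexp (P : Measure Ω) (Z X : Ω → ℝ) : EReal :=
  if (∫⁻ ω, ENNReal.ofReal (-(Z ω * X ω)) ∂P) = ⊤ then ⊥
  else ((∫⁻ ω, ENNReal.ofReal (Z ω * X ω) ∂P : ℝ≥0∞) : EReal)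
    - ((∫⁻ ω, ENNReal.ofReal (-(Z ω * X ω)) ∂P : ℝ≥0∞) : EReal)

/-- Coherent utility function determined by a set of densities `D`. -/
noncomputable def cohU (P : Measure Ω) (D : Set (Ω → ℝ)) (X : Ω → ℝ) : EReal :=
  ⨅ Z ∈ D, eexp P Z X

/-- The weak `L¹`-space associated with `D`. -/
def Lw (P : Measure Ω) (D : Set (Ω → ℝ)) : Set (Ω → ℝ) :=
  {X | Measurable X ∧ ⊥ < cohU P D X ∧ ⊥ < cohU P D (fun ω => -X ω)}

noncomputable def tailSup (P : Measure Ω) (D : Set (Ω → ℝ)) (X : Ω → ℝ) (n : ℕ) : ℝ≥0∞ :=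
  ⨆ Z ∈ D, ∫⁻ ω in {ω | (n : ℝ) < |X ω|}, ENNReal.ofReal (Z ω * |X ω|) ∂P

/-- The strong `L¹`-space associated with `D`. -/
def Ls (P : Measure Ω) (D : Set (Ω → ℝ)) : Set (Ω → ℝ) :=
  {X | Measurable X ∧ Tendsto (tailSup P D X) atTop (nhds 0)}

/-- Risk-neutral densities for the set `A` of attainable P&Ls. -/
def RiskNeutral (P : Measure Ω) (A : Set (Ω → ℝ)) : Set (Ω → ℝ) :=
  {Z | Z ∈ Dens P ∧ ∀ X ∈ A, eexp P Z X ≤ 0}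

/-- `A` is `D`-consistent. -/
def DConsistent (P : Measure Ω) (D A : Set (Ω → ℝ)) : Prop :=
  ∃ A' ⊆ A ∩ Ls P D, D ∩ RiskNeutral P A = D ∩ RiskNeutral P A'

/-- Sequential compactness of `D` in the weak topology `σ(L¹, L^∞)`. -/
def WSeqCompact (P : Measure Ω) (D : Set (Ω → ℝ)) : Prop :=
  ∀ Z : ℕ → Ω → ℝ, (∀ n, Z n ∈ D) → ∃ W ∈ D, ∃ φ : ℕ → ℕ, StrictMono φ ∧
    ∀ g : Ω → ℝ, Measurable g → (∃ C : ℝ, ∀ ω, |g ω| ≤ C) →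
      Tendsto (fun k => ∫ ω, Z (φ k) ω * g ω ∂P) atTop (nhds (∫ ω, W ω * g ω ∂P))

/-- `D` is closed under `L¹`-convergence (within densities). -/
def L1Closed (P : Measure Ω) (D : Set (Ω → ℝ)) : Prop :=
  ∀ Z : ℕ → Ω → ℝ, (∀ n, Z n ∈ D) → ∀ W ∈ Dens P,
    Tendsto (fun n => ∫ ω, |Z n ω - W ω| ∂P) atTop (nhds 0) → W ∈ D


/-- Risk-Adjusted Return on Capital for profit-determining set `PD` and risk-determining
set `RD`: `+∞` if the profit is positive and the risk is nonpositive, and otherwise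
`(inf_{Q∈PD} E_Q[X]) / (−inf_{Q∈RD} E_Q[X])`, with `0/0 = 0` and `∞/∞ = 0`
(conventions built into `EReal` division). -/
noncomputable def RAROC (P : Measure Ω) (PD RD : Set (Ω → ℝ)) (X : Ω → ℝ) : EReal :=
  if 0 < cohU P PD X ∧ 0 ≤ cohU P RD X then ⊤
  else cohU P PD X / (-(cohU P RD X))

/-!
Write `u_D(X)` for `cohU P D X`. When both utilities are finite, `RAROC(X) > R` says that
`u_PD(X) + R u_RD(X) > 0`, which makes `E_Z X > 0` for every `Z` in the mixture
`K = (1/(1+R)) PD + (R/(1+R)) RD`; so a risk-neutral density in `K` excludes good deals.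
Conversely, the consistency of `A` allows one to work with payoffs in `L¹_s(RD)`, whose expectations
are weakly continuous on `RD`: there the utilities are attained, and absence of good deals means
`u_K ≤ 0`. By Sion's minimax theorem and compactness, a single `Z ∈ K` then satisfies `E_Z X ≤ 0`
for all these payoffs.

The weak compactness of `RD`, given sequentially, is needed as topological compactness. This
instance of the Eberlein–Šmulian theorem has a direct proof for convex sets in `L¹`: the functional
`f ↦ ∫ (√(1 + f²) - 1)` is strictly convex and weakly lower semicontinuous, so a decreasing
sequence of closed convex sets that nearly maximises its infimum shrinks to a single point, and
this point lies in every closed half-space belonging to a given ultrafilter.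
-/

section Compactness

theorem nonempty_inter_iInter_of_antitone {X : Type*} [TopologicalSpace X] {K : Set X}
    (hK : IsCountablyCompact K) {V : ℕ → Set X} (hV : Antitone V) (hVc : ∀ n, IsClosed (V n))
    (hne : ∀ n, (K ∩ V n).Nonempty) : (K ∩ ⋂ n, V n).Nonempty := by
  by_contra! hempty
  have hcover : K ⊆ ⋃ n, (V n)ᶜ := by
    rwa [← compl_iInter, subset_compl_iff_disjoint_right, disjoint_iff_inter_eq_empty]
  obtain ⟨n, hn⟩ := hK.elim_directed_cover (fun n => (V n)ᶜ) (fun n => (hVc n).isOpen_compl) hcover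
    (Monotone.directed_le fun _ _ hmn => compl_subset_compl.2 (hV hmn))
  obtain ⟨x, hxK, hxV⟩ := hne n
  exact hn hxK hxV

theorem exists_monotone_seq_iSup_sInf_image_le {X ι : Type*} [SemilatticeSup ι] [Nonempty ι]
    {F : ι → Set X} (hF : Antitone F) {φ : X → ℝ} (hbelow : ∀ i, BddBelow (φ '' F i))
    (habove : BddAbove (range fun i => sInf (φ '' F i))) :
    ∃ u : ℕ → ι, Monotone u ∧ ∀ x ∈ ⋂ n, F (u n), ⨆ i, sInf (φ '' F i) ≤ φ x := by
  obtain ⟨v, -, -, hv_lim, hv_mem⟩ :=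
    (isLUB_ciSup habove).exists_seq_monotone_tendsto (range_nonempty _)
  choose u hu using hv_mem
  refine ⟨partialSups u, (partialSups u).monotone, fun x hx => le_of_tendsto' hv_lim fun n => ?_⟩
  rw [← hu n]
  exact csInf_le (hbelow _)
    (mem_image_of_mem φ (hF (le_partialSups u n) (mem_iInter.1 hx n)))

theorem exists_mem_iInter_le_of_sInf_image_le {X ι : Type*} [TopologicalSpace X] [SemilatticeSup ι]
    {K : Set X} (hK : IsCountablyCompact K) {F : ι → Set X} (hF : Antitone F)
    (hFc : ∀ i, IsClosed (F i)) (hne : ∀ i, (K ∩ F i).Nonempty) {φ : X → ℝ}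
    (hφ : LowerSemicontinuous φ) {σ : ℝ} (hσ : ∀ i, sInf (φ '' (K ∩ F i)) ≤ σ)
    {u : ℕ → ι} (hu : Monotone u) (i : ι) :
    ∃ x ∈ ⋂ n, K ∩ F (u n), x ∈ F i ∧ φ x ≤ σ := by
  have hpos (n : ℕ) : (0 : ℝ) < 1 / (n + 1) := Nat.one_div_pos_of_nat
  obtain ⟨x, hxK, hxV⟩ := nonempty_inter_iInter_of_antitone hK
    (V := fun n => F (i ⊔ u n) ∩ φ ⁻¹' Iic (σ + 1 / (n + 1)))
    (fun m n hmn => inter_subset_inter (hF (sup_le_sup_left (hu hmn) i))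
      (preimage_mono (Iic_subset_Iic.2
        (by gcongr))))
    (fun n => (hFc _).inter (hφ.isClosed_preimage _))
    (fun n => by
      obtain ⟨_, ⟨x, hx, rfl⟩, hxσ⟩ := exists_lt_of_csInf_lt ((hne (i ⊔ u n)).image φ)
        ((hσ _).trans_lt (lt_add_of_pos_right σ (hpos n)))
      exact ⟨x, hx.1, hx.2, hxσ.le⟩)
  simp only [mem_iInter, mem_inter_iff, mem_preimage, mem_Iic] at hxV
  refine ⟨x, mem_iInter.2 fun n => ⟨hxK, hF le_sup_right (hxV n).1⟩, hF le_sup_left (hxV 0).1, ?_⟩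
  refine le_of_forall_pos_lt_add fun ε hε => ?_
  obtain ⟨n, hn⟩ := exists_nat_one_div_lt hε
  exact (hxV n).2.trans_lt (add_lt_add_right hn σ)

/-- Cantor's theorem along a sequence of members that drive the infimum of `φ` up to its
supremum: strict convexity leaves only one point, which therefore lies in every `F i`. -/
theorem nonempty_inter_iInter_of_strictConvexOn {E ι : Type*} [AddCommGroup E] [Module ℝ E]
    [TopologicalSpace E] [SemilatticeSup ι] [Nonempty ι] {K : Set E} {φ : E → ℝ} {F : ι → Set E}
    (hK : IsCountablyCompact K) (hφ : StrictConvexOn ℝ K φ) (hφ_lsc : LowerSemicontinuous φ)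
    (hφ_below : BddBelow (φ '' K)) (hφ_above : BddAbove (φ '' K)) (hF : Antitone F)
    (hFc : ∀ i, IsClosed (F i)) (hFconv : ∀ i, Convex ℝ (F i)) (hne : ∀ i, (K ∩ F i).Nonempty) :
    (K ∩ ⋂ i, F i).Nonempty := by
  have hsup : BddAbove (range fun i => sInf (φ '' (K ∩ F i))) := by
    obtain ⟨M, hM⟩ := hφ_above
    refine ⟨M, forall_mem_range.2 fun i => ?_⟩
    obtain ⟨x, hx⟩ := hne i
    exact (csInf_le (hφ_below.mono (image_mono inter_subset_left)) (mem_image_of_mem φ hx)).trans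
      (hM (mem_image_of_mem φ hx.1))
  obtain ⟨u, hu, hσ⟩ := exists_monotone_seq_iSup_sInf_image_le
    (fun i j hij => inter_subset_inter_right K (hF hij))
    (fun i => hφ_below.mono (image_mono inter_subset_left)) hsup
  have hpoint := exists_mem_iInter_le_of_sInf_image_le hK hF hFc hne hφ_lsc (le_ciSup hsup) hu
  have hφu : StrictConvexOn ℝ (⋂ n, K ∩ F (u n)) φ :=
    hφ.subset (iInter_subset_of_subset 0 inter_subset_left)
      (convex_iInter fun n => hφ.1.inter (hFconv (u n)))
  obtain ⟨x, hx, -, hφx⟩ := hpoint (Classical.arbitrary ι)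
  refine ⟨x, (mem_iInter.1 hx 0).1, mem_iInter.2 fun i => ?_⟩
  obtain ⟨y, hy, hyi, hφy⟩ := hpoint i
  rwa [hφu.eq_of_isMinOn (fun z hz => hφx.trans (hσ z hz)) (fun z hz => hφy.trans (hσ z hz)) hx hy]

theorem isCompact_weakBilin_of_isCountablyCompact {E F : Type*} [AddCommGroup E] [Module ℝ E]
    [AddCommGroup F] [Module ℝ F] {B : E →ₗ[ℝ] F →ₗ[ℝ] ℝ} {K : Set (WeakBilin B)}
    (hK : IsCountablyCompact K) {φ : WeakBilin B → ℝ} (hφ : StrictConvexOn ℝ K φ)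
    (hφ_lsc : LowerSemicontinuous φ) (hφ_below : BddBelow (φ '' K))
    (hφ_above : BddAbove (φ '' K)) : IsCompact K := by
  classical
  refine isCompact_iff_ultrafilter_le_nhds.2 fun 𝒰 hKU => ?_
  let ι := {p : F × ℝ // ∀ᶠ x : WeakBilin B in 𝒰, B x p.1 ≤ p.2}
  let H : ι → Set (WeakBilin B) := fun p => {x | B x p.1.1 ≤ p.1.2}
  have hHmem (s : Finset ι) : ⋂ p ∈ s, H p ∈ 𝒰 := (biInter_finset_mem s).2 fun p _ => p.2
  obtain ⟨x, hxK, hx⟩ := nonempty_inter_iInter_of_strictConvexOn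
    (F := fun s : Finset ι => ⋂ p ∈ s, H p) hK hφ hφ_lsc hφ_below hφ_above
    (fun s t hst => biInter_mono hst fun _ _ => le_rfl)
    (fun s => isClosed_biInter fun p _ =>
      isClosed_le (WeakBilin.eval_continuous B p.1.1) continuous_const)
    (fun s => convex_iInter₂ fun p _ => convex_halfSpace_le (B.flip p.1.1).isLinear p.1.2)
    (fun s => 𝒰.nonempty_of_mem (inter_mem (le_principal_iff.1 hKU) (hHmem s)))
  have hle {y : F} {c : ℝ} (h : ∀ᶠ z : WeakBilin B in 𝒰, B z y ≤ c) : B x y ≤ c :=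
    mem_iInter₂.1 (mem_iInter.1 hx {⟨(y, c), h⟩}) ⟨(y, c), h⟩ (Finset.mem_singleton_self _)
  refine ⟨x, hxK, ?_⟩
  rw [nhds_induced, ← tendsto_iff_comap, tendsto_pi_nhds]
  refine fun y => tendsto_order.2 ⟨fun a ha => ?_, fun b hb => ?_⟩
  · by_contra hlow
    exact ha.not_ge (hle ((𝒰.eventually_not.2 hlow).mono fun z hz => not_lt.1 hz))
  · by_contra hhigh
    have := hle (y := -y) (c := -b)
      ((𝒰.eventually_not.2 hhigh).mono fun z hz => by simpa using not_lt.1 hz)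
    exact hb.not_ge (by simpa using this)

end Compactness

section Alternatives

variable {E ι : Type*} [AddCommGroup E] [Module ℝ E] [TopologicalSpace E]
  [IsTopologicalAddGroup E] [ContinuousSMul ℝ E] {K : Set E} {F : ι → E → ℝ}

theorem exists_weights_forall_sum_pos (hK : IsCompact K) (hKconv : Convex ℝ K) (hKne : K.Nonempty)
    (hF : ∀ i, ConvexOn ℝ K (F i)) (hF_lsc : ∀ i, LowerSemicontinuousOn (F i) K) {s : Finset ι}
    (hs : ∀ x ∈ K, ∃ i ∈ s, 0 < F i x) :
    ∃ w : ι → ℝ, (∀ i ∈ s, 0 ≤ w i) ∧ ∑ i ∈ s, w i = 1 ∧ ∀ x ∈ K, 0 < ∑ i ∈ s, w i * F i x := by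
  classical
  let W : Set (ι → ℝ) := {w | (∀ i ∈ s, 0 ≤ w i) ∧ ∑ i ∈ s, w i = 1}
  have hW : Convex ℝ W := by
    rintro v ⟨hv, hv1⟩ w ⟨hw, hw1⟩ a b ha hb hab
    refine ⟨fun i hi => add_nonneg (mul_nonneg ha (hv i hi)) (mul_nonneg hb (hw i hi)), ?_⟩
    simp only [Pi.add_apply, Pi.smul_apply, smul_eq_mul, Finset.sum_add_distrib, ← Finset.mul_sum,
      hv1, hw1, mul_one, hab]
  have hvertex : (fun i => Pi.single i 1) '' (s : Set ι) ⊆ W := by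
    rintro _ ⟨i, hi, rfl⟩
    exact ⟨fun j _ => (Pi.single_nonneg (α := fun _ => ℝ)).2 zero_le_one j,
      (Finset.sum_pi_single' i 1 s).trans (if_pos hi)⟩
  have hconvex (w) (hw : w ∈ W) : ConvexOn ℝ K fun x => ∑ i ∈ s, w i * F i x := by
    simpa only [Finset.sum_fn] using Finset.sum_induction (fun i x => w i * F i x) (ConvexOn ℝ K)
      (fun _ _ => ConvexOn.add) (convexOn_const 0 hKconv) fun i hi => (hF i).smul (hw.1 i hi)
  have hconcave (x) : ConcaveOn ℝ W fun w => ∑ i ∈ s, w i * F i x := by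
    refine ⟨hW, fun v _ w _ a b _ _ _ => Eq.le ?_⟩
    simp only [smul_eq_mul, Pi.add_apply, Pi.smul_apply, add_mul, mul_assoc,
      Finset.sum_add_distrib, Finset.mul_sum]
  obtain ⟨w, hw, hpos⟩ := Sion.exists_lt_iInf_of_lt_iInf_of_finite (X := K) (Y := W)
    (f := fun x w => ∑ i ∈ s, w i * F i x) (t := 0) hKne hK
    (fun w hw => lowerSemicontinuousOn_sum fun i hi =>
      (continuous_const_mul (w i)).comp_lowerSemicontinuousOn (hF_lsc i)
        (monotone_mul_left_of_nonneg (hw.1 i hi)))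
    (fun w hw => (hconvex w hw).quasiconvexOn) hW
    (fun x _ => Continuous.upperSemicontinuous (by fun_prop) |>.upperSemicontinuousOn _)
    (fun x _ => (hconcave x).quasiconcaveOn) hKconv (s.finite_toSet.image _) hvertex
    fun x hx => by
      obtain ⟨i, hi, hFi⟩ := hs x hx
      exact ⟨_, mem_image_of_mem _ hi, by simpa [Pi.single_apply, hi] using hFi⟩
  exact ⟨w, hw.1, hw.2, hpos⟩

/-- Compactness reduces the system to finitely many inequalities, to which Sion's minimax theorem
applies. -/
theorem exists_forall_le_zero_of_convexOn (hK : IsCompact K) (hKconv : Convex ℝ K)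
    (hKne : K.Nonempty) (hF : ∀ i, ConvexOn ℝ K (F i))
    (hF_lsc : ∀ i, LowerSemicontinuousOn (F i) K)
    (hmix : ∀ (s : Finset ι) (w : ι → ℝ), (∀ i ∈ s, 0 ≤ w i) → ∑ i ∈ s, w i = 1 →
      ∃ x ∈ K, ∑ i ∈ s, w i * F i x ≤ 0) :
    ∃ x ∈ K, ∀ i, F i x ≤ 0 := by
  by_contra! hno
  obtain ⟨u, hu⟩ := (LowerSemicontinuousOn.inter_biInter_preimage_Iic_eq_empty_iff_exists_finset hK
    (I := univ) (c := (0 : ℝ)) fun i _ => hF_lsc i).1 (by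
      simpa [eq_empty_iff_forall_notMem] using hno)
  obtain ⟨w, hw, hw1, hpos⟩ := exists_weights_forall_sum_pos hK hKconv hKne hF hF_lsc
    (s := u.map (Function.Embedding.subtype _)) fun x hx => by simpa using hu x hx
  obtain ⟨x, hx, hle⟩ := hmix _ w hw hw1
  exact (hpos x hx).not_ge hle

end Alternatives

section WeakTopology

variable {E : Type*} [AddCommGroup E] [Module ℝ E] [TopologicalSpace E]

theorem tendsto_toWeakSpace_iff {α : Type*} {l : Filter α} {u : α → E} {x : E} :
    Tendsto (fun i => toWeakSpace ℝ E (u i)) l (nhds (toWeakSpace ℝ E x)) ↔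
      ∀ Λ : StrongDual ℝ E, Tendsto (fun i => Λ (u i)) l (nhds (Λ x)) := by
  rw [← tendsto_pi_nhds]
  exact (Topology.IsInducing.mk rfl).tendsto_nhds_iff

variable [IsTopologicalAddGroup E] [ContinuousSMul ℝ E] [LocallyConvexSpace ℝ E]

theorem isClosed_image_toWeakSpace_of_convex {s : Set E} (hs : Convex ℝ s) (hsc : IsClosed s) :
    IsClosed (toWeakSpace ℝ E '' s) := by
  rw [← hsc.closure_eq, hs.toWeakSpace_closure ℝ]
  exact isClosed_closure

theorem lowerSemicontinuous_comp_toWeakSpace_symm {φ : E → ℝ} (hφ : ConvexOn ℝ univ φ)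
    (hφ_lsc : LowerSemicontinuous φ) :
    LowerSemicontinuous fun x => φ ((toWeakSpace ℝ E).symm x) := by
  refine lowerSemicontinuous_iff_isClosed_preimage.2 fun r => ?_
  have hconv : Convex ℝ (φ ⁻¹' Iic r) := by simpa [preimage, Iic] using hφ.convex_le r
  have h := isClosed_image_toWeakSpace_of_convex hconv (hφ_lsc.isClosed_preimage r)
  rwa [LinearEquiv.image_eq_preimage_symm] at h

theorem isCompact_image_toWeakSpace {s : Set E} (hs : Convex ℝ s)
    (hK : IsCountablyCompact (toWeakSpace ℝ E '' s)) {φ : E → ℝ} (hφ : StrictConvexOn ℝ univ φ)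
    (hφ_lsc : LowerSemicontinuous φ) (hbelow : BddBelow (φ '' s)) (habove : BddAbove (φ '' s)) :
    IsCompact (toWeakSpace ℝ E '' s) := by
  let ψ : WeakSpace ℝ E → ℝ := fun x => φ ((toWeakSpace ℝ E).symm x)
  have hψ : StrictConvexOn ℝ (toWeakSpace ℝ E '' s) ψ := by
    refine ⟨hs.linear_image (toWeakSpace ℝ E).toLinearMap, fun x _ y _ hxy a b ha hb hab => ?_⟩
    simp only [ψ, map_add, map_smul]
    exact hφ.2 (mem_univ _) (mem_univ _) ((toWeakSpace ℝ E).symm.injective.ne hxy) ha hb hab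
  have himage : ψ '' (toWeakSpace ℝ E '' s) = φ '' s := by
    simp only [ψ, image_image, LinearEquiv.symm_apply_apply]
  exact isCompact_weakBilin_of_isCountablyCompact hK hψ
    (lowerSemicontinuous_comp_toWeakSpace_symm hφ.convexOn hφ_lsc)
    (himage ▸ hbelow) (himage ▸ habove)

end WeakTopology

section L1

variable {P : Measure Ω}

theorem one_add_mul_lt_sqrt_mul_sqrt {x y : ℝ} (hxy : x ≠ y) :
    1 + x * y < √(1 + x ^ 2) * √(1 + y ^ 2) := by
  rw [← Real.sqrt_mul (by positivity)]
  refine Real.lt_sqrt_of_sq_lt ?_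
  linarith [sq_pos_of_ne_zero (sub_ne_zero.2 hxy)]

theorem strictConvexOn_sqrt_one_add_sq_sub_one :
    StrictConvexOn ℝ univ fun x : ℝ => √(1 + x ^ 2) - 1 := by
  suffices h : StrictConvexOn ℝ univ fun x : ℝ => √(1 + x ^ 2) from h.add_const (-1)
  refine ⟨convex_univ, fun x _ y _ hxy a b ha hb hab => (Real.sqrt_lt' (by positivity)).2 ?_⟩
  have hx : √(1 + x ^ 2) ^ 2 = 1 + x ^ 2 := Real.sq_sqrt (by positivity)
  have hy : √(1 + y ^ 2) ^ 2 = 1 + y ^ 2 := Real.sq_sqrt (by positivity)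
  calc 1 + (a • x + b • y) ^ 2
      = a ^ 2 * (1 + x ^ 2) + b ^ 2 * (1 + y ^ 2) + 2 * (a * b) * (1 + x * y) := by
        simp only [smul_eq_mul]
        linear_combination -(a + b + 1) * hab
    _ < a ^ 2 * √(1 + x ^ 2) ^ 2 + b ^ 2 * √(1 + y ^ 2) ^ 2
        + 2 * (a * b) * (√(1 + x ^ 2) * √(1 + y ^ 2)) := by
        rw [hx, hy]
        gcongr
        exact one_add_mul_lt_sqrt_mul_sqrt hxy
    _ = (a • √(1 + x ^ 2) + b • √(1 + y ^ 2)) ^ 2 := by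
        simp only [smul_eq_mul]
        ring

theorem lipschitzWith_sqrt_one_add_sq_sub_one :
    LipschitzWith 1 fun x : ℝ => √(1 + x ^ 2) - 1 := by
  refine LipschitzWith.of_dist_le_mul fun x y => ?_
  rw [NNReal.coe_one, one_mul, Real.dist_eq, Real.dist_eq, sub_sub_sub_cancel_right]
  rcases eq_or_ne x y with rfl | hxy
  · simp only [sub_self, le_refl]
  refine sq_le_sq.1 ?_
  have hx : √(1 + x ^ 2) ^ 2 = 1 + x ^ 2 := Real.sq_sqrt (by positivity)
  have hy : √(1 + y ^ 2) ^ 2 = 1 + y ^ 2 := Real.sq_sqrt (by positivity)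
  linarith [one_add_mul_lt_sqrt_mul_sqrt hxy]

theorem coeFn_smul_add_smul {p : ℝ≥0∞} {f₁ f₂ : Lp ℝ p P} {Z₁ Z₂ : Ω → ℝ} (h₁ : f₁ =ᵐ[P] Z₁)
    (h₂ : f₂ =ᵐ[P] Z₂) (a b : ℝ) : ⇑(a • f₁ + b • f₂) =ᵐ[P] a • Z₁ + b • Z₂ :=
  (Lp.coeFn_add _ _).trans
    (((Lp.coeFn_smul a f₁).trans (h₁.const_smul a)).add
      ((Lp.coeFn_smul b f₂).trans (h₂.const_smul b)))

theorem strictConvexOn_integral_compLp {g : ℝ → ℝ} (hg : StrictConvexOn ℝ univ g) {C : NNReal}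
    (hgC : LipschitzWith C g) (hg0 : g 0 = 0) :
    StrictConvexOn ℝ univ fun f : Lp ℝ 1 P => ∫ ω, hgC.compLp hg0 f ω ∂P := by
  refine ⟨convex_univ, fun f₁ _ f₂ _ hne a b ha hb hab => ?_⟩
  have hcomp (f : Lp ℝ 1 P) : hgC.compLp hg0 f =ᵐ[P] g ∘ f := hgC.coeFn_compLp hg0 f
  have hint (f : Lp ℝ 1 P) : Integrable (g ∘ f) P :=
    (L1.integrable_coeFn (hgC.compLp hg0 f)).congr (hcomp f)
  have hcombo : g ∘ ⇑(a • f₁ + b • f₂) =ᵐ[P] fun ω => g (a * f₁ ω + b * f₂ ω) :=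
    (coeFn_smul_add_smul EventuallyEq.rfl EventuallyEq.rfl a b).fun_comp g
  have hright : Integrable (fun ω => a * g (f₁ ω) + b * g (f₂ ω)) P :=
    ((hint f₁).const_mul a).add ((hint f₂).const_mul b)
  simp only [integral_congr_ae (hcomp _), smul_eq_mul]
  rw [integral_congr_ae hcombo, ← integral_const_mul, ← integral_const_mul,
    ← integral_add ((hint f₁).const_mul a) ((hint f₂).const_mul b)]
  have hle : (fun ω => g (a * f₁ ω + b * f₂ ω)) ≤ᵐ[P] fun ω => a * g (f₁ ω) + b * g (f₂ ω) :=
    ae_of_all _ fun ω => hg.convexOn.2 (mem_univ _) (mem_univ _) ha.le hb.le hab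
  have hleft := (hint _).congr hcombo
  refine (integral_mono_ae hleft hright hle).lt_of_ne fun heq => hne (Lp.ext ?_)
  filter_upwards [(integral_eq_iff_of_ae_le hleft hright hle).1 heq] with ω hω
  by_contra hω_ne
  exact (hg.2 (mem_univ _) (mem_univ _) hω_ne ha hb hab).ne hω

theorem isCompact_image_toWeakSpace_L1 {s : Set (Lp ℝ 1 P)} (hs : Convex ℝ s)
    (hbdd : Bornology.IsBounded s) (hK : IsCountablyCompact (toWeakSpace ℝ (Lp ℝ 1 P) '' s)) :
    IsCompact (toWeakSpace ℝ (Lp ℝ 1 P) '' s) := by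
  have hg := lipschitzWith_sqrt_one_add_sq_sub_one
  have hg0 : √(1 + (0 : ℝ) ^ 2) - 1 = 0 := by simp
  have himage : Bornology.IsBounded
      ((fun f : Lp ℝ 1 P => ∫ ω, hg.compLp hg0 f ω ∂P) '' s) := by
    simp only [← L1.integral_eq_integral, L1.integral_eq]
    exact (L1.integralCLM.lipschitz.comp (hg.lipschitzWith_compLp hg0)).isBounded_image hbdd
  exact isCompact_image_toWeakSpace hs hK
    (strictConvexOn_integral_compLp strictConvexOn_sqrt_one_add_sq_sub_one hg hg0)
    (continuous_integral.comp (hg.continuous_compLp hg0)).lowerSemicontinuous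
    himage.bddBelow himage.bddAbove

end L1

section Duality

variable {P : Measure Ω}

/-- The functional `f ↦ ∫ f g` on `L¹` given by an essentially bounded function `g`. -/
noncomputable def integralMulCLM {g : Ω → ℝ} (hg : MemLp g ∞ P) : StrongDual ℝ (Lp ℝ 1 P) :=
  ((ContinuousLinearMap.mul ℝ ℝ).lpPairing P 1 ∞).flip hg.toLp

theorem integralMulCLM_apply {g : Ω → ℝ} (hg : MemLp g ∞ P) (f : Lp ℝ 1 P) :
    integralMulCLM hg f = ∫ ω, f ω * g ω ∂P := by
  rw [integralMulCLM, ContinuousLinearMap.flip_apply, ContinuousLinearMap.lpPairing_eq_integral]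
  refine integral_congr_ae ?_
  filter_upwards [hg.coeFn_toLp] with ω hω
  rw [hω, ContinuousLinearMap.mul_apply']

theorem memLp_top_of_measurable_of_abs_le {g : Ω → ℝ} (hg : Measurable g) {C : ℝ}
    (hC : ∀ ω, |g ω| ≤ C) : MemLp g ∞ P :=
  memLp_top_of_bound hg.aestronglyMeasurable C (ae_of_all _ hC)

/-- Riesz representation in the Hilbert space `L²`, which is contained in `L¹`. -/
theorem exists_integrable_apply_indicatorConstLp [IsFiniteMeasure P]
    (f : StrongDual ℝ (Lp ℝ 1 P)) :
    ∃ g : Ω → ℝ, Integrable g P ∧ ∀ {s : Set Ω} (hs : MeasurableSet s) (c : ℝ),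
      f (indicatorConstLp 1 hs (measure_ne_top P s) c) = c * ∫ ω in s, g ω ∂P := by
  have hanti : Lp ℝ 2 P ≤ Lp ℝ 1 P := Lp.antitone one_le_two
  let incl : Lp ℝ 2 P →ₗ[ℝ] Lp ℝ 1 P :=
    { toFun := fun h => ⟨h.1, hanti h.2⟩
      map_add' := fun _ _ => rfl
      map_smul' := fun _ _ => rfl }
  let C : ℝ≥0∞ := P univ ^ (1 / ENNReal.toReal 1 - 1 / ENNReal.toReal 2)
  have hincl (h) : ‖incl h‖ ≤ C.toReal * ‖h‖ := by
    rw [mul_comm, Lp.norm_def, Lp.norm_def, ← ENNReal.toReal_mul]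
    refine ENNReal.toReal_mono (ENNReal.mul_ne_top (Lp.eLpNorm_ne_top h) ?_)
      (eLpNorm_le_eLpNorm_mul_rpow_measure_univ one_le_two (Lp.aestronglyMeasurable h))
    exact ENNReal.rpow_ne_top_of_nonneg (by norm_num) (measure_ne_top P univ)
  let T : StrongDual ℝ (Lp ℝ 2 P) := f.comp (incl.mkContinuous _ hincl)
  obtain ⟨g, hg⟩ := (InnerProductSpace.toDual ℝ (Lp ℝ 2 P)).surjective T
  refine ⟨g, (Lp.memLp g).integrable one_le_two, fun {s} hs c => ?_⟩
  calc f (indicatorConstLp 1 hs (measure_ne_top P s) c)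
      = T (indicatorConstLp 2 hs (measure_ne_top P s) c) := rfl
    _ = c * ∫ ω in s, g ω ∂P := by
      rw [← hg, InnerProductSpace.toDual_apply_apply, real_inner_comm,
        L2.inner_indicatorConstLp_eq_inner_setIntegral ℝ hs, Real.inner_apply]

theorem ae_abs_le_of_forall_abs_setIntegral_le [IsFiniteMeasure P] {g : Ω → ℝ}
    (hg : Integrable g P) {C : ℝ}
    (hC : ∀ s, MeasurableSet s → |∫ ω in s, g ω ∂P| ≤ C * P.real s) : ∀ᵐ ω ∂P, |g ω| ≤ C := by
  have hle {h : Ω → ℝ} (hh : Integrable h P)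
      (hs : ∀ s, MeasurableSet s → ∫ ω in s, h ω ∂P ≤ C * P.real s) : ∀ᵐ ω ∂P, h ω ≤ C :=
    ae_le_of_forall_setIntegral_le hh (integrable_const C) fun s hsm _ => by
      rw [setIntegral_const, smul_eq_mul, mul_comm]
      exact hs s hsm
  filter_upwards [hle hg fun s hs => (le_abs_self _).trans (hC s hs),
    hle hg.neg fun s hs => by
      simp only [Pi.neg_apply, integral_neg]
      exact (neg_le_abs _).trans (hC s hs)] with ω h₁ h₂
  exact abs_le.2 ⟨by simpa using neg_le_neg h₂, h₁⟩

theorem exists_bounded_forall_apply_eq_integral [IsFiniteMeasure P]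
    (f : StrongDual ℝ (Lp ℝ 1 P)) :
    ∃ g : Ω → ℝ, Measurable g ∧ (∀ ω, |g ω| ≤ ‖f‖) ∧
      ∀ h : Lp ℝ 1 P, f h = ∫ ω, h ω * g ω ∂P := by
  obtain ⟨g₀, hg₀, hf⟩ := exists_integrable_apply_indicatorConstLp f
  have hbound : ∀ᵐ ω ∂P, |g₀ ω| ≤ ‖f‖ := by
    refine ae_abs_le_of_forall_abs_setIntegral_le hg₀ fun s hs => ?_
    have h := f.le_opNorm (indicatorConstLp 1 hs (measure_ne_top P s) 1)
    simpa [hf, norm_indicatorConstLp] using h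
  let g : Ω → ℝ := fun ω => max (-‖f‖) (min ‖f‖ (hg₀.1.mk g₀ ω))
  have hgm : Measurable g :=
    measurable_const.max (measurable_const.min hg₀.1.stronglyMeasurable_mk.measurable)
  have hgb (ω) : |g ω| ≤ ‖f‖ := abs_le.2
    ⟨le_max_left _ _, max_le (neg_le_self (norm_nonneg f)) (min_le_left _ _)⟩
  have hgg₀ : g =ᵐ[P] g₀ := by
    filter_upwards [hbound, hg₀.1.ae_eq_mk] with ω hω hmk
    rw [abs_le] at hω
    simp only [g, ← hmk, min_eq_right hω.2, max_eq_right hω.1]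
  have hg := memLp_top_of_measurable_of_abs_le (P := P) hgm hgb
  refine ⟨g, hgm, hgb, fun h => ?_⟩
  rw [← integralMulCLM_apply hg]
  refine Lp.induction ENNReal.one_ne_top (fun h => f h = integralMulCLM hg h)
    (fun c s hs _ => ?_) (fun u v hu hv _ hfu hfv => ?_)
    (isClosed_eq f.continuous (integralMulCLM hg).continuous) h
  · rw [Lp.simpleFunc.coe_indicatorConst, hf, integralMulCLM_apply, ← integral_const_mul,
      ← integral_indicator hs]
    refine integral_congr_ae ?_
    filter_upwards [indicatorConstLp_coeFn (p := 1) (hs := hs) (hμs := measure_ne_top P s)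
      (c := c), hgg₀] with ω h₁ h₂
    rw [h₁, h₂, ← indicator_mul_left]
  · rw [map_add, map_add, hfu, hfv]

theorem tendsto_toWeakSpace_L1 [IsFiniteMeasure P] {α : Type*} {l : Filter α} {u : α → Lp ℝ 1 P}
    {f : Lp ℝ 1 P} (h : ∀ g : Ω → ℝ, Measurable g → (∃ C, ∀ ω, |g ω| ≤ C) →
      Tendsto (fun i => ∫ ω, u i ω * g ω ∂P) l (nhds (∫ ω, f ω * g ω ∂P))) :
    Tendsto (fun i => toWeakSpace ℝ (Lp ℝ 1 P) (u i)) l (nhds (toWeakSpace ℝ (Lp ℝ 1 P) f)) := by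
  refine tendsto_toWeakSpace_iff.2 fun Λ => ?_
  obtain ⟨g, hg, hgb, hΛ⟩ := exists_bounded_forall_apply_eq_integral Λ
  simpa only [← hΛ] using h g hg ⟨_, hgb⟩

theorem continuous_integral_toWeakSpace_symm_mul {g : Ω → ℝ} (hg : MemLp g ∞ P) :
    Continuous fun f : WeakSpace ℝ (Lp ℝ 1 P) =>
      ∫ ω, (toWeakSpace ℝ (Lp ℝ 1 P)).symm f ω * g ω ∂P := by
  simp only [← integralMulCLM_apply hg]
  exact WeakBilin.eval_continuous _ (integralMulCLM hg)

end Duality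

section DensityClasses

variable {P : Measure Ω} {D D' : Set (Ω → ℝ)}

theorem integrable_of_mem_Dens {Z : Ω → ℝ} (hZ : Z ∈ Dens P) : Integrable Z P :=
  ⟨hZ.1.aestronglyMeasurable, (hasFiniteIntegral_iff_ofReal (ae_of_all _ hZ.2.1)).2
    (hZ.2.2.trans_lt ENNReal.one_lt_top)⟩

/-- The `L¹` classes of the functions in `D`. -/
def l1Classes (P : Measure Ω) (D : Set (Ω → ℝ)) : Set (Lp ℝ 1 P) :=
  {f | ∃ Z ∈ D, f =ᵐ[P] Z}

/-- The `L¹` classes of the functions in `D`, as a set in the topology `σ(L¹, L^∞)`. -/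
def weakClasses (P : Measure Ω) (D : Set (Ω → ℝ)) : Set (WeakSpace ℝ (Lp ℝ 1 P)) :=
  (toWeakSpace ℝ (Lp ℝ 1 P)).symm ⁻¹' l1Classes P D

theorem image_toWeakSpace_l1Classes :
    toWeakSpace ℝ (Lp ℝ 1 P) '' l1Classes P D = weakClasses P D :=
  LinearEquiv.image_eq_preimage_symm _ _

theorem l1Classes_mono (h : D ⊆ D') : l1Classes P D ⊆ l1Classes P D' :=
  fun _ ⟨Z, hZ, hfZ⟩ => ⟨Z, h hZ, hfZ⟩

theorem exists_mem_weakClasses_ae_eq (hD : D ⊆ Dens P) {Z : Ω → ℝ} (hZ : Z ∈ D) :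
    ∃ f ∈ weakClasses P D, (toWeakSpace ℝ (Lp ℝ 1 P)).symm f =ᵐ[P] Z := by
  have hf := (integrable_of_mem_Dens (hD hZ)).coeFn_toL1
  exact ⟨toWeakSpace ℝ (Lp ℝ 1 P) ((integrable_of_mem_Dens (hD hZ)).toL1 Z), ⟨Z, hZ, hf⟩, hf⟩

theorem convex_l1Classes (hD : Convex ℝ D) : Convex ℝ (l1Classes P D) := by
  rintro f₁ ⟨Z₁, hZ₁, h₁⟩ f₂ ⟨Z₂, hZ₂, h₂⟩ a b ha hb hab
  exact ⟨_, hD hZ₁ hZ₂ ha hb hab, coeFn_smul_add_smul h₁ h₂ a b⟩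

theorem convex_weakClasses (hD : Convex ℝ D) : Convex ℝ (weakClasses P D) :=
  (convex_l1Classes hD).linear_preimage (toWeakSpace ℝ (Lp ℝ 1 P)).symm.toLinearMap

theorem isBounded_l1Classes (hD : D ⊆ Dens P) : Bornology.IsBounded (l1Classes P D) := by
  refine isBounded_iff_forall_norm_le.2 ⟨1, ?_⟩
  rintro f ⟨Z, hZ, hfZ⟩
  have henorm : ∫⁻ ω, ‖f ω‖ₑ ∂P = ∫⁻ ω, ENNReal.ofReal (Z ω) ∂P := by
    refine lintegral_congr_ae ?_
    filter_upwards [hfZ] with ω hω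
    rw [hω, Real.enorm_of_nonneg ((hD hZ).2.1 ω)]
  rw [L1.norm_def, henorm, (hD hZ).2.2, ENNReal.toReal_one]

open scoped Pointwise in
theorem weakClasses_smul_add_smul (hD : D ⊆ Dens P) (hD' : D' ⊆ Dens P) (a b : ℝ) :
    weakClasses P (a • D + b • D') = a • weakClasses P D + b • weakClasses P D' := by
  ext f
  constructor
  · rintro ⟨_, ⟨_, ⟨Z, hZ, rfl⟩, _, ⟨Z', hZ', rfl⟩, rfl⟩, hf⟩
    obtain ⟨g, hg, hgZ⟩ := exists_mem_weakClasses_ae_eq hD hZ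
    obtain ⟨g', hg', hgZ'⟩ := exists_mem_weakClasses_ae_eq hD' hZ'
    refine ⟨_, smul_mem_smul_set hg, _, smul_mem_smul_set hg',
      (toWeakSpace ℝ (Lp ℝ 1 P)).symm.injective (Lp.ext ?_)⟩
    exact (coeFn_smul_add_smul hgZ hgZ' a b).trans hf.symm
  · rintro ⟨_, ⟨g, ⟨Z, hZ, hg⟩, rfl⟩, _, ⟨g', ⟨Z', hZ', hg'⟩, rfl⟩, rfl⟩
    exact ⟨_, add_mem_add (smul_mem_smul_set hZ) (smul_mem_smul_set hZ'),
      coeFn_smul_add_smul hg hg' a b⟩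

theorem WSeqCompact.isCompact_weakClasses [IsFiniteMeasure P] (hcomp : WSeqCompact P D)
    (hD : D ⊆ Dens P) (hconv : Convex ℝ D) : IsCompact (weakClasses P D) := by
  suffices h : IsSeqCompact (weakClasses P D) by
    rw [← image_toWeakSpace_l1Classes] at h ⊢
    exact isCompact_image_toWeakSpace_L1 (convex_l1Classes hconv) (isBounded_l1Classes hD)
      h.isCountablyCompact
  intro f hf
  choose Z hZ hfZ using hf
  obtain ⟨W, hW, φ, hφ, hlim⟩ := hcomp Z hZ
  obtain ⟨g, hg, hgW⟩ := exists_mem_weakClasses_ae_eq hD hW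
  refine ⟨g, hg, φ, hφ, tendsto_toWeakSpace_L1
    (u := fun k => (toWeakSpace ℝ (Lp ℝ 1 P)).symm (f (φ k)))
    (f := (toWeakSpace ℝ (Lp ℝ 1 P)).symm g) fun h hh hhb => ?_⟩
  rw [integral_congr_ae (hgW.fun_mul (EventuallyEq.refl _ h))]
  exact (hlim h hh hhb).congr fun k =>
    integral_congr_ae ((hfZ _).symm.fun_mul (EventuallyEq.refl _ h))

theorem isClosed_l1Classes_of_isCompact (hK : IsCompact (weakClasses P D)) :
    IsClosed (l1Classes P D) :=
  hK.isClosed.preimage (toWeakSpaceCLM ℝ (Lp ℝ 1 P)).continuous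

theorem L1Closed.isClosed_l1Classes (hD : L1Closed P D) (hDD' : D ⊆ D') (hD' : D' ⊆ Dens P)
    (hcl : IsClosed (l1Classes P D')) : IsClosed (l1Classes P D) := by
  refine IsSeqClosed.isClosed fun f g hf hfg => ?_
  obtain ⟨W, hW, hgW⟩ :=
    hcl.mem_of_tendsto hfg (Eventually.of_forall fun n => l1Classes_mono hDD' (hf n))
  choose Z hZ hfZ using hf
  refine ⟨W, hD Z hZ W (hD' hW) ?_, hgW⟩
  refine (tendsto_iff_norm_sub_tendsto_zero.1 hfg).congr fun n => ?_
  rw [L1.norm_eq_integral_norm]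
  refine integral_congr_ae ?_
  filter_upwards [Lp.coeFn_sub (f n) g, hfZ n, hgW] with ω hsub hn hg
  rw [hsub, Pi.sub_apply, hn, hg, Real.norm_eq_abs]

theorem L1Closed.isCompact_weakClasses (hD : L1Closed P D) (hconv : Convex ℝ D) (hDD' : D ⊆ D')
    (hD' : D' ⊆ Dens P) (hK : IsCompact (weakClasses P D')) : IsCompact (weakClasses P D) := by
  refine hK.of_isClosed_subset ?_ (preimage_mono (l1Classes_mono hDD'))
  rw [← image_toWeakSpace_l1Classes]
  exact isClosed_image_toWeakSpace_of_convex (convex_l1Classes hconv)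
    (hD.isClosed_l1Classes hDD' hD' (isClosed_l1Classes_of_isCompact hK))

end DensityClasses

section Payoffs

open ProbabilityTheory

variable {P : Measure Ω} {D : Set (Ω → ℝ)} {X Y Z : Ω → ℝ} {f : WeakSpace ℝ (Lp ℝ 1 P)}

/-- The expectation `∫ f X` of the payoff `X` under the density class `f`, as a function on `L¹`
in the topology `σ(L¹, L^∞)`; it is junk where `f X` is not integrable. -/
noncomputable def classExpectation (P : Measure Ω) (X : Ω → ℝ) (f : WeakSpace ℝ (Lp ℝ 1 P)) : ℝ :=
  ∫ ω, (toWeakSpace ℝ (Lp ℝ 1 P)).symm f ω * X ω ∂P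

theorem classExpectation_eq_integral (hfZ : (toWeakSpace ℝ (Lp ℝ 1 P)).symm f =ᵐ[P] Z) :
    classExpectation P X f = ∫ ω, Z ω * X ω ∂P :=
  integral_congr_ae (hfZ.mul (EventuallyEq.refl _ X))

theorem integrable_symm_mul (hX : ∀ Z ∈ D, Integrable (Z * X) P) (hf : f ∈ weakClasses P D) :
    Integrable (fun ω => (toWeakSpace ℝ (Lp ℝ 1 P)).symm f ω * X ω) P := by
  obtain ⟨Z, hZ, hfZ⟩ := hf
  exact (hX Z hZ).congr (hfZ.symm.mul (EventuallyEq.refl _ X))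

theorem classExpectation_add (hX : ∀ Z ∈ D, Integrable (Z * X) P)
    (hY : ∀ Z ∈ D, Integrable (Z * Y) P) (hf : f ∈ weakClasses P D) :
    classExpectation P (X + Y) f = classExpectation P X f + classExpectation P Y f := by
  simp only [classExpectation, Pi.add_apply, mul_add]
  exact integral_add (integrable_symm_mul hX hf) (integrable_symm_mul hY hf)

theorem classExpectation_smul (c : ℝ) :
    classExpectation P (c • X) f = c * classExpectation P X f := by
  simp only [classExpectation, Pi.smul_apply, smul_eq_mul, mul_left_comm _ c, integral_const_mul]

/-- The payoffs whose expectation is finite and weakly continuous over the densities in `D`. -/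
def continuousPayoffs (P : Measure Ω) (D : Set (Ω → ℝ)) : Submodule ℝ (Ω → ℝ) where
  carrier := {X | (∀ Z ∈ D, Integrable (Z * X) P) ∧
    ContinuousOn (classExpectation P X) (weakClasses P D)}
  zero_mem' := by
    refine ⟨fun Z _ => (mul_zero Z).symm ▸ integrable_zero Ω ℝ P, ?_⟩
    exact (continuousOn_const (c := (0 : ℝ))).congr fun f _ => by simp [classExpectation]
  add_mem' := fun ⟨hX, hXc⟩ ⟨hY, hYc⟩ =>
    ⟨fun Z hZ => mul_add Z _ _ ▸ (hX Z hZ).add (hY Z hZ),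
      (hXc.add hYc).congr fun _ hf => classExpectation_add hX hY hf⟩
  smul_mem' := fun c X ⟨hX, hXc⟩ =>
    ⟨fun Z hZ => mul_smul_comm c Z X ▸ (hX Z hZ).smul c,
      (continuousOn_const.mul hXc).congr fun _ _ => classExpectation_smul c⟩

theorem continuousPayoffs_anti {D' : Set (Ω → ℝ)} (h : D ⊆ D') :
    continuousPayoffs P D' ≤ continuousPayoffs P D :=
  fun _ hX => ⟨fun Z hZ => hX.1 Z (h hZ), hX.2.mono (preimage_mono (l1Classes_mono h))⟩

theorem convexOn_classExpectation (hD : Convex ℝ D) (hX : ∀ Z ∈ D, Integrable (Z * X) P) :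
    ConvexOn ℝ (weakClasses P D) (classExpectation P X) := by
  refine ⟨convex_weakClasses hD, ?_⟩
  rintro f ⟨Z, hZ, hfZ⟩ g ⟨W, hW, hgW⟩ a b - - -
  have hint {V : Ω → ℝ} (hV : V ∈ D) (c : ℝ) : Integrable (fun ω => c * (V ω * X ω)) P :=
    (hX V hV).const_mul c
  rw [classExpectation_eq_integral (f := a • f + b • g) (coeFn_smul_add_smul hfZ hgW a b),
    classExpectation_eq_integral hfZ, classExpectation_eq_integral hgW]
  simp only [Pi.add_apply, Pi.smul_apply, smul_eq_mul, add_mul, mul_assoc]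
  rw [integral_add (hint hZ a) (hint hW b), integral_const_mul, integral_const_mul]

theorem sum_mul_classExpectation {ι : Type*} {s : Finset ι} {w : ι → ℝ} {X : ι → Ω → ℝ}
    (hX : ∀ i ∈ s, X i ∈ continuousPayoffs P D) (hf : f ∈ weakClasses P D) :
    ∑ i ∈ s, w i * classExpectation P (X i) f = classExpectation P (∑ i ∈ s, w i • X i) f := by
  simp only [classExpectation, Finset.sum_apply, Pi.smul_apply, smul_eq_mul, Finset.mul_sum,
    mul_left_comm _ (w _)]
  rw [integral_finsetSum s fun i hi => (integrable_symm_mul (hX i hi).1 hf).const_mul (w i)]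
  exact Finset.sum_congr rfl fun i _ => (integral_const_mul _ _).symm

theorem memLp_top_truncation (hX : Measurable X) (C : ℝ) : MemLp (truncation X C) ∞ P :=
  memLp_top_of_bound hX.aestronglyMeasurable.truncation |C|
    (ae_of_all _ (abs_truncation_le_bound X C))

theorem abs_sub_truncation_le {α : Type*} (X : α → ℝ) (C : ℝ) (ω : α) :
    |X ω - truncation X C ω| ≤ |X ω| := by
  by_cases h : X ω ∈ Ioc (-C) C <;> simp [truncation, h]

/-- Truncating at `n + 1` rather than `n` because `truncation X n` vanishes where `X = -n`. -/
theorem lintegral_mul_sub_truncation_le_tailSup (hD : D ⊆ Dens P) (hX : Measurable X) (n : ℕ)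
    (hZ : Z ∈ D) : ∫⁻ ω, ‖Z ω * (X ω - truncation X (n + 1) ω)‖ₑ ∂P ≤ tailSup P D X n := by
  refine le_trans ?_ (le_iSup₂ (f := fun Z (_ : Z ∈ D) =>
    ∫⁻ ω in {ω | (n : ℝ) < |X ω|}, ENNReal.ofReal (Z ω * |X ω|) ∂P) Z hZ)
  rw [← lintegral_indicator (measurableSet_lt measurable_const hX.abs)]
  refine lintegral_mono fun ω => ?_
  by_cases h : (n : ℝ) < |X ω|
  · rw [indicator_of_mem (show ω ∈ {ω | (n : ℝ) < |X ω|} from h), Real.enorm_eq_ofReal_abs, abs_mul,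
      abs_of_nonneg ((hD hZ).2.1 ω)]
    exact ENNReal.ofReal_le_ofReal
      (mul_le_mul_of_nonneg_left (abs_sub_truncation_le X _ ω) ((hD hZ).2.1 ω))
  · simp [truncation_eq_self ((not_lt.1 h).trans_lt (lt_add_one (n : ℝ)))]

theorem integrable_mul_of_mem_Ls (hD : D ⊆ Dens P) (hX : X ∈ Ls P D) (hZ : Z ∈ D) :
    Integrable (Z * X) P := by
  obtain ⟨n, hn⟩ := (hX.2.eventually_lt_const ENNReal.zero_lt_top).exists
  have htrunc : Integrable (Z * truncation X (n + 1)) P :=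
    (integrable_of_mem_Dens (hD hZ)).mul_of_top_left (memLp_top_truncation hX.1 (n + 1))
  have hm : AEStronglyMeasurable (Z * (X - truncation X (n + 1))) P :=
    (integrable_of_mem_Dens (hD hZ)).1.mul
      (hX.1.aestronglyMeasurable.sub (memLp_top_truncation hX.1 (n + 1)).1)
  have htail : Integrable (Z * (X - truncation X (n + 1))) P :=
    ⟨hm, (lintegral_mul_sub_truncation_le_tailSup hD hX.1 n hZ).trans_lt hn⟩
  simpa only [← mul_add, add_sub_cancel] using htrunc.add htail

theorem edist_classExpectation_truncation_le (hD : D ⊆ Dens P) (hX : X ∈ Ls P D) (n : ℕ)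
    (hf : f ∈ weakClasses P D) :
    edist (classExpectation P X f) (classExpectation P (truncation X (n + 1)) f) ≤
      tailSup P D X n := by
  obtain ⟨Z, hZ, hfZ⟩ := hf
  have htrunc : Integrable (Z * truncation X (n + 1)) P :=
    (integrable_of_mem_Dens (hD hZ)).mul_of_top_left (memLp_top_truncation hX.1 (n + 1))
  calc edist (classExpectation P X f) (classExpectation P (truncation X (n + 1)) f)
      = ‖∫ ω, Z ω * (X ω - truncation X (n + 1) ω) ∂P‖ₑ := by
        rw [edist_eq_enorm_sub, classExpectation_eq_integral hfZ, classExpectation_eq_integral hfZ]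
        simp only [mul_sub]
        exact congrArg _ (integral_sub (integrable_mul_of_mem_Ls hD hX hZ) htrunc).symm
    _ ≤ ∫⁻ ω, ‖Z ω * (X ω - truncation X (n + 1) ω)‖ₑ ∂P := enorm_integral_le_lintegral_enorm _
    _ ≤ tailSup P D X n := lintegral_mul_sub_truncation_le_tailSup hD hX.1 n hZ

theorem Ls_subset_continuousPayoffs (hD : D ⊆ Dens P) : Ls P D ⊆ continuousPayoffs P D := by
  refine fun X hX => ⟨fun Z hZ => integrable_mul_of_mem_Ls hD hX hZ, ?_⟩
  have hunif : TendstoUniformlyOn (fun n : ℕ => classExpectation P (truncation X (n + 1)))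
      (classExpectation P X) atTop (weakClasses P D) :=
    EMetric.tendstoUniformlyOn_iff.2 fun ε hε => by
      filter_upwards [hX.2.eventually_lt_const hε] with n hn f hf
      exact (edist_classExpectation_truncation_le hD hX n hf).trans_lt hn
  exact hunif.continuousOn <| Frequently.of_forall fun n =>
    (continuous_integral_toWeakSpace_symm_mul (memLp_top_truncation hX.1 (n + 1))).continuousOn

end Payoffs

section Expectations

variable {P : Measure Ω} {D : Set (Ω → ℝ)} {X Z W : Ω → ℝ}

theorem eexp_eq_integral (h : Integrable (fun ω => Z ω * X ω) P) :
    eexp P Z X = ((∫ ω, Z ω * X ω ∂P : ℝ) : EReal) := by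
  have hpos : ∫⁻ ω, ENNReal.ofReal (Z ω * X ω) ∂P ≠ ⊤ :=
    ((lintegral_mono fun ω => Real.ofReal_le_enorm _).trans_lt h.2).ne
  have hneg : ∫⁻ ω, ENNReal.ofReal (-(Z ω * X ω)) ∂P ≠ ⊤ :=
    ((lintegral_mono fun ω => Real.ofReal_le_enorm _).trans_lt h.neg.2).ne
  rw [eexp, if_neg hneg, integral_eq_lintegral_pos_part_sub_lintegral_neg_part h, EReal.coe_sub,
    EReal.coe_ennreal_toReal hpos, EReal.coe_ennreal_toReal hneg]

theorem coe_le_eexp_iff {c : ℝ} :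
    (c : EReal) ≤ eexp P Z X ↔ ∫⁻ ω, ENNReal.ofReal (-(Z ω * X ω)) ∂P ≠ ⊤ ∧
      (c : EReal) + (∫⁻ ω, ENNReal.ofReal (-(Z ω * X ω)) ∂P : ℝ≥0∞) ≤
        (∫⁻ ω, ENNReal.ofReal (Z ω * X ω) ∂P : ℝ≥0∞) := by
  rw [eexp]
  split_ifs with hN
  · simp [hN]
  · rw [EReal.le_sub_iff_add_le (.inl (EReal.coe_ennreal_ne_bot _))
      (.inl (EReal.coe_ennreal_eq_top_iff.not.2 hN))]
    exact (and_iff_right hN).symm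

theorem lintegral_ofReal_smul_add_smul_mul (hZ : Measurable Z) (hZ0 : 0 ≤ Z) (hW : Measurable W)
    (hW0 : 0 ≤ W) (hX : Measurable X) {a b : ℝ} (ha : 0 ≤ a) (hb : 0 ≤ b) :
    ∫⁻ ω, ENNReal.ofReal ((a • Z + b • W) ω * X ω) ∂P
      = ENNReal.ofReal a * ∫⁻ ω, ENNReal.ofReal (Z ω * X ω) ∂P
        + ENNReal.ofReal b * ∫⁻ ω, ENNReal.ofReal (W ω * X ω) ∂P := by
  have hmul {V : Ω → ℝ} (hV : 0 ≤ V) (ω) :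
      ENNReal.ofReal (V ω * X ω) = ENNReal.ofReal (V ω) * ENNReal.ofReal (X ω) :=
    ENNReal.ofReal_mul (hV ω)
  have hcombo : 0 ≤ a • Z + b • W := add_nonneg (smul_nonneg ha hZ0) (smul_nonneg hb hW0)
  have hm {V : Ω → ℝ} (hV : Measurable V) : Measurable fun ω => ENNReal.ofReal (V ω * X ω) :=
    (hV.mul hX).ennreal_ofReal
  rw [← lintegral_const_mul _ (hm hZ), ← lintegral_const_mul _ (hm hW),
    ← lintegral_add_left ((hm hZ).const_mul _)]
  refine lintegral_congr fun ω => ?_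
  rw [hmul hcombo, hmul hZ0, hmul hW0, Pi.add_apply, Pi.smul_apply, Pi.smul_apply, smul_eq_mul,
    smul_eq_mul, ENNReal.ofReal_add (mul_nonneg ha (hZ0 ω)) (mul_nonneg hb (hW0 ω)),
    ENNReal.ofReal_mul ha, ENNReal.ofReal_mul hb]
  ring

theorem coe_le_eexp_smul_add_smul (hZ : Z ∈ Dens P) (hW : W ∈ Dens P) (hX : Measurable X)
    {a b c d : ℝ} (ha : 0 ≤ a) (hb : 0 ≤ b) (hc : (c : EReal) ≤ eexp P Z X)
    (hd : (d : EReal) ≤ eexp P W X) :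
    ((a * c + b * d : ℝ) : EReal) ≤ eexp P (a • Z + b • W) X := by
  have hpos := lintegral_ofReal_smul_add_smul_mul (P := P) hZ.1 hZ.2.1 hW.1 hW.2.1 hX ha hb
  have hneg := lintegral_ofReal_smul_add_smul_mul (P := P) hZ.1 hZ.2.1 hW.1 hW.2.1 hX.neg ha hb
  simp only [Pi.neg_apply, mul_neg] at hneg
  rw [coe_le_eexp_iff] at hc hd ⊢
  rw [hpos, hneg]
  generalize ∫⁻ ω, ENNReal.ofReal (-(Z ω * X ω)) ∂P = NZ at *
  generalize ∫⁻ ω, ENNReal.ofReal (-(W ω * X ω)) ∂P = NW at *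
  obtain ⟨hNZ, hc⟩ := hc
  obtain ⟨hNW, hd⟩ := hd
  refine ⟨ENNReal.add_ne_top.2 ⟨ENNReal.mul_ne_top ENNReal.ofReal_ne_top hNZ,
    ENNReal.mul_ne_top ENNReal.ofReal_ne_top hNW⟩, ?_⟩
  lift NZ to NNReal using hNZ
  lift NW to NNReal using hNW
  have ha' : (0 : EReal) ≤ a := EReal.coe_nonneg.2 ha
  have hb' : (0 : EReal) ≤ b := EReal.coe_nonneg.2 hb
  have hsum := add_le_add (mul_le_mul_of_nonneg_left hc ha') (mul_le_mul_of_nonneg_left hd hb')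
  refine le_trans (le_of_eq ?_) (hsum.trans_eq ?_)
  · simp only [EReal.coe_ennreal_add, EReal.coe_ennreal_mul, EReal.coe_ennreal_ofReal,
      max_eq_left ha, max_eq_left hb, EReal.coe_nnreal_eq_coe_real, ← EReal.coe_mul,
      ← EReal.coe_add]
    congr 1
    ring
  · simp only [EReal.coe_ennreal_add, EReal.coe_ennreal_mul, EReal.coe_ennreal_ofReal,
      max_eq_left ha, max_eq_left hb]

theorem exists_cohU_eq_integral (hD : D ⊆ Dens P) (hne : D.Nonempty)
    (hK : IsCompact (weakClasses P D)) (hX : X ∈ continuousPayoffs P D) :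
    ∃ Z ∈ D, cohU P D X = ((∫ ω, Z ω * X ω ∂P : ℝ) : EReal) := by
  obtain ⟨f₀, hf₀, -⟩ := exists_mem_weakClasses_ae_eq hD hne.some_mem
  obtain ⟨f, ⟨Z, hZ, hfZ⟩, hmin⟩ := hK.exists_isMinOn ⟨f₀, hf₀⟩ hX.2
  refine ⟨Z, hZ, le_antisymm ?_ (le_iInf₂ fun W hW => ?_)⟩
  · rw [← eexp_eq_integral (hX.1 Z hZ)]
    exact iInf₂_le Z hZ
  · obtain ⟨g, hg, hgW⟩ := exists_mem_weakClasses_ae_eq hD hW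
    rw [eexp_eq_integral (hX.1 W hW), EReal.coe_le_coe_iff, ← classExpectation_eq_integral hfZ,
      ← classExpectation_eq_integral hgW]
    exact hmin hg

end Expectations

section NoGoodDeals

variable {P : Measure Ω} {D : Set (Ω → ℝ)}

theorem exists_mem_forall_eexp_le_zero (hD : D ⊆ Dens P) (hconv : Convex ℝ D) (hne : D.Nonempty)
    (hK : IsCompact (weakClasses P D)) {S : Set (Ω → ℝ)}
    (hS : S ⊆ continuousPayoffs P D) (hcohU : ∀ X ∈ convexHull ℝ S, cohU P D X ≤ 0) :
    ∃ Z ∈ D, ∀ X ∈ S, eexp P Z X ≤ 0 := by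
  obtain ⟨f₀, hf₀, -⟩ := exists_mem_weakClasses_ae_eq hD hne.some_mem
  obtain ⟨f, ⟨Z, hZ, hfZ⟩, hf⟩ := exists_forall_le_zero_of_convexOn (ι := S) hK
    (convex_weakClasses hconv) ⟨f₀, hf₀⟩
    (fun X => convexOn_classExpectation hconv (hS X.2).1)
    (fun X => (hS X.2).2.lowerSemicontinuousOn) fun s w hw hw1 => by
      have hXS : ∑ X ∈ s, w X • X.1 ∈ convexHull ℝ S :=
        (convex_convexHull ℝ S).sum_mem hw hw1 fun X _ => subset_convexHull ℝ S X.2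
      obtain ⟨Z, hZ, hmin⟩ := exists_cohU_eq_integral hD hne hK
        (Submodule.sum_smul_mem (continuousPayoffs P D) w fun X (_ : X ∈ s) => hS X.2)
      obtain ⟨f, hf, hfZ⟩ := exists_mem_weakClasses_ae_eq hD hZ
      refine ⟨f, hf, ?_⟩
      rw [sum_mul_classExpectation (fun X _ => hS X.2) hf, classExpectation_eq_integral hfZ]
      exact EReal.coe_nonpos.1 (hmin ▸ hcohU _ hXS)
  refine ⟨Z, hZ, fun X hX => ?_⟩
  rw [eexp_eq_integral ((hS hX).1 Z hZ), ← classExpectation_eq_integral hfZ]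
  exact EReal.coe_nonpos.2 (hf ⟨X, hX⟩)

theorem nonempty_inter_RiskNeutral {RD A : Set (Ω → ℝ)} (hA : DConsistent P RD A)
    (hAconv : Convex ℝ A) (hRD : RD ⊆ Dens P) (hDRD : D ⊆ RD) (hconv : Convex ℝ D)
    (hne : D.Nonempty) (hK : IsCompact (weakClasses P D))
    (hcohU : ∀ X ∈ A, X ∈ continuousPayoffs P RD → cohU P D X ≤ 0) :
    (D ∩ RiskNeutral P A).Nonempty := by
  obtain ⟨A', hA', heq⟩ := hA
  have hA'_cont : A' ⊆ continuousPayoffs P RD := fun X hX =>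
    Ls_subset_continuousPayoffs hRD (hA' hX).2
  obtain ⟨Z, hZ, hZA'⟩ := exists_mem_forall_eexp_le_zero (hDRD.trans hRD) hconv hne hK
    (hA'_cont.trans (continuousPayoffs_anti hDRD)) fun X hX =>
      hcohU X (convexHull_min (fun Y hY => (hA' hY).1) hAconv hX)
        (convexHull_min hA'_cont (continuousPayoffs P RD).convex hX)
  have hZA : Z ∈ RD ∩ RiskNeutral P A := heq ▸ ⟨hDRD hZ, hRD (hDRD hZ), hZA'⟩
  exact ⟨Z, hZ, hZA.2⟩

end NoGoodDeals

section RAROC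

variable {P : Measure Ω} {PD RD : Set (Ω → ℝ)} {X : Ω → ℝ} {R : ℝ}

theorem lt_RAROC_iff (hPD : PD ⊆ RD) (hR : 0 ≤ R) :
    (R : EReal) < RAROC P PD RD X ↔
      ∃ c d : ℝ, (c : EReal) ≤ cohU P PD X ∧ (d : EReal) ≤ cohU P RD X ∧ 0 < c + R * d := by
  have hle : cohU P RD X ≤ cohU P PD X := biInf_mono hPD
  have hR' : (0 : EReal) ≤ R := EReal.coe_nonneg.2 hR
  rw [RAROC]
  generalize cohU P PD X = p at *
  generalize cohU P RD X = r at *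
  split_ifs with hif
  · obtain ⟨c, hc0, hcp⟩ := EReal.lt_iff_exists_real_btwn.1 hif.1
    exact iff_of_true (EReal.coe_lt_top R) ⟨c, 0, hcp.le, hif.2, by simpa using hc0⟩
  rcases le_or_gt 0 r with hr | hr
  · have hp : p = 0 := le_antisymm (not_lt.1 fun hp => hif ⟨hp, hr⟩) (hr.trans hle)
    have hr0 : r = 0 := le_antisymm (hp ▸ hle) hr
    rw [hp, hr0, EReal.zero_div]
    refine iff_of_false hR'.not_gt ?_
    rintro ⟨c, d, hc, hd, hpos⟩
    exact hpos.not_ge (add_nonpos (EReal.coe_nonpos.1 hc)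
      (mul_nonpos_of_nonneg_of_nonpos hR (EReal.coe_nonpos.1 hd)))
  induction r with
  | top => exact absurd hr (by simp)
  | bot => simpa using hR'
  | coe r =>
    rw [← EReal.coe_neg, EReal.lt_div_iff (EReal.coe_pos.2 (neg_pos.2 (EReal.coe_neg'.1 hr)))
      (EReal.coe_ne_top _), ← EReal.coe_mul]
    constructor
    · intro hlt
      obtain ⟨c, hc, hcp⟩ := EReal.lt_iff_exists_real_btwn.1 hlt
      exact ⟨c, r, hcp.le, le_rfl, by linarith [EReal.coe_lt_coe_iff.1 hc]⟩
    · rintro ⟨c, d, hc, hd, hpos⟩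
      refine lt_of_lt_of_le (EReal.coe_lt_coe_iff.2 ?_) hc
      linarith [mul_le_mul_of_nonneg_left (EReal.coe_le_coe_iff.1 hd) hR]

theorem one_div_mul_add_div_mul (c d : ℝ) :
    1 / (1 + R) * c + R / (1 + R) * d = (c + R * d) / (1 + R) := by
  ring

open scoped Pointwise in
theorem cohU_le_zero_of_not_lt_RAROC (hPD : PD ⊆ RD) (hPDne : PD.Nonempty) (hRD : RD ⊆ Dens P)
    (hPDK : IsCompact (weakClasses P PD)) (hRDK : IsCompact (weakClasses P RD)) (hR : 0 ≤ R)
    (hX : X ∈ continuousPayoffs P RD) (hlt : ¬(R : EReal) < RAROC P PD RD X) :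
    cohU P ((1 / (1 + R)) • PD + (R / (1 + R)) • RD) X ≤ 0 := by
  obtain ⟨Zp, hZp, hp⟩ := exists_cohU_eq_integral (hPD.trans hRD) hPDne hPDK
    (continuousPayoffs_anti hPD hX)
  obtain ⟨Zr, hZr, hr⟩ := exists_cohU_eq_integral hRD (hPDne.mono hPD) hRDK hX
  have hint {V : Ω → ℝ} (hV : V ∈ RD) (c : ℝ) : Integrable (fun ω => c * (V ω * X ω)) P :=
    (hX.1 V hV).const_mul c
  have hsum (a b : ℝ) : eexp P (a • Zp + b • Zr) X
      = ((a * ∫ ω, Zp ω * X ω ∂P + b * ∫ ω, Zr ω * X ω ∂P : ℝ) : EReal) := by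
    rw [← integral_const_mul, ← integral_const_mul,
      ← integral_add (hint (hPD hZp) a) (hint hZr b), eexp_eq_integral] <;>
    simp only [Pi.add_apply, Pi.smul_apply, smul_eq_mul, add_mul, mul_assoc]
    exact (hint (hPD hZp) a).add (hint hZr b)
  refine (iInf₂_le _ (Set.add_mem_add (smul_mem_smul_set hZp) (smul_mem_smul_set hZr))).trans ?_
  rw [hsum, one_div_mul_add_div_mul, EReal.coe_nonpos]
  refine div_nonpos_of_nonpos_of_nonneg (not_lt.1 fun hpos => hlt ?_) (by positivity)
  exact (lt_RAROC_iff hPD hR).2 ⟨_, _, hp.ge, hr.ge, hpos⟩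

open scoped Pointwise in
theorem nonempty_smul_add_smul_inter_RiskNeutral {A : Set (Ω → ℝ)} (hA : DConsistent P RD A)
    (hAconv : Convex ℝ A) (hRD : RD ⊆ Dens P) (hRDconv : Convex ℝ RD)
    (hRDK : IsCompact (weakClasses P RD)) (hPD : PD ⊆ RD) (hPDconv : Convex ℝ PD)
    (hPDne : PD.Nonempty) (hPDK : IsCompact (weakClasses P PD)) (hR : 0 ≤ R)
    (hno : ∀ X ∈ A, ¬(R : EReal) < RAROC P PD RD X) :
    (((1 / (1 + R)) • PD + (R / (1 + R)) • RD) ∩ RiskNeutral P A).Nonempty := by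
  have hmix : (1 / (1 + R)) • PD + (R / (1 + R)) • RD ⊆ RD := by
    rintro _ ⟨_, ⟨Zp, hZp, rfl⟩, _, ⟨Zr, hZr, rfl⟩, rfl⟩
    exact hRDconv (hPD hZp) hZr (by positivity) (by positivity) (by field_simp)
  refine nonempty_inter_RiskNeutral hA hAconv hRD hmix
    ((hPDconv.smul _).add (hRDconv.smul _)) (hPDne.smul_set.add (hPDne.mono hPD).smul_set) ?_
    fun X hX hXc => cohU_le_zero_of_not_lt_RAROC hPD hPDne hRD hPDK hRDK hR hXc (hno X hX)
  rw [weakClasses_smul_add_smul (hPD.trans hRD) hRD]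
  exact (hPDK.smul _).add (hRDK.smul _)

theorem not_lt_RAROC_of_eexp_le_zero (hPD : PD ⊆ RD) (hRD : RD ⊆ Dens P) (hR : 0 ≤ R)
    (hX : Measurable X) {Zp Zr : Ω → ℝ} (hZp : Zp ∈ PD) (hZr : Zr ∈ RD)
    (h : eexp P ((1 / (1 + R)) • Zp + (R / (1 + R)) • Zr) X ≤ 0) :
    ¬(R : EReal) < RAROC P PD RD X := by
  rw [lt_RAROC_iff hPD hR]
  rintro ⟨c, d, hc, hd, hpos⟩
  have hle := coe_le_eexp_smul_add_smul (a := 1 / (1 + R)) (b := R / (1 + R)) (hRD (hPD hZp))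
    (hRD hZr) hX (by positivity) (by positivity) (hc.trans (iInf₂_le Zp hZp))
    (hd.trans (iInf₂_le Zr hZr))
  rw [one_div_mul_add_div_mul] at hle
  exact (div_pos hpos (by positivity)).not_ge (EReal.coe_nonpos.1 (hle.trans h))

end RAROC

/-- Fundamental Theorem of Asset Pricing, RAROC-based NGD.
There is no `X ∈ A` with `RAROC(X) > R` iff
`((1/(1+R))·𝒫𝒟 + (R/(1+R))·ℛ𝒟) ∩ ℛ(A) ≠ ∅`. -/
theorem stmt_13 (P : Measure Ω) [IsProbabilityMeasure P] (RD PD : Set (Ω → ℝ))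
    (hRDsub : RD ⊆ Dens P) (hRDne : RD.Nonempty) (hRDconv : Convex ℝ RD)
    (hRDcomp : WSeqCompact P RD)
    (hPDsub : PD ⊆ RD) (hPDne : PD.Nonempty) (hPDconv : Convex ℝ PD)
    (hPDclosed : L1Closed P PD)
    (A : Set (Ω → ℝ)) (hAmeas : ∀ X ∈ A, Measurable X) (hAconv : Convex ℝ A)
    (hAcons : DConsistent P RD A) (R : ℝ) (hR : 0 ≤ R) :
    (¬∃ X ∈ A, (R : EReal) < RAROC P PD RD X) ↔
      ({Z : Ω → ℝ | ∃ Zp ∈ PD, ∃ Zr ∈ RD,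
          Z = fun ω => (1 / (1 + R)) * Zp ω + (R / (1 + R)) * Zr ω}
        ∩ RiskNeutral P A).Nonempty := by
  constructor
  · intro hno
    have hRDK := hRDcomp.isCompact_weakClasses hRDsub hRDconv
    have hPDK := hPDclosed.isCompact_weakClasses hPDconv hPDsub hRDsub hRDK
    obtain ⟨_, ⟨_, ⟨Zp, hZp, rfl⟩, _, ⟨Zr, hZr, rfl⟩, rfl⟩, hZ⟩ :=
      nonempty_smul_add_smul_inter_RiskNeutral hAcons hAconv hRDsub hRDconv hRDK hPDsub hPDconv
        hPDne hPDK hR fun X hX hlt => hno ⟨X, hX, hlt⟩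
    exact ⟨_, ⟨Zp, hZp, Zr, hZr, rfl⟩, hZ⟩
  · rintro ⟨_, ⟨Zp, hZp, Zr, hZr, rfl⟩, -, hZ⟩ ⟨X, hX, hlt⟩
    exact not_lt_RAROC_of_eexp_le_zero hPDsub hRDsub hR (hAmeas X hX) hZp hZr (hZ X hX) hlt
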